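/- Let n be a natural number, let P_f and P_b be n×n real symmetric positive definite matrices, and let W be any n×n real matrix. Then W·P_f·Wᵀ + (I − W)·P_b·(I − W)ᵀ − (P_f⁻¹ + P_b⁻¹)⁻¹ is positive semidefinite; moreover equality (i.e., the difference is zero) holds when W = P_b·(P_f + P_b)⁻¹. -/

import Mathlib

/-!
Completing the square: with `S = Pf + Pb` and `K = Pb * S⁻¹`, the combined covariance minus
`(Pf⁻¹ + Pb⁻¹)⁻¹` equals `(W - K) * S * (W - K)ᵀ`, which is positive semidefinite because `S` is,
and vanishes at `W = K`. This uses `(Pf⁻¹ + Pb⁻¹)⁻¹ = Pb * S⁻¹ * Pf = Pb - Pb * S⁻¹ * Pb`.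
-/

open Matrix

/-- The parallel sum of `A` and `B`, from the factorization `A⁻¹ + B⁻¹ = A⁻¹ * (A + B) * B⁻¹`. -/
lemma inv_add_inv_inv_eq {n : ℕ} {A B : Matrix (Fin n) (Fin n) ℝ}
    (hA : IsUnit A.det) (hB : IsUnit B.det) (hS : IsUnit (A + B).det) :
    (A⁻¹ + B⁻¹)⁻¹ = B - B * (A + B)⁻¹ * B := by
  have hfac : A⁻¹ + B⁻¹ = A⁻¹ * (A + B) * B⁻¹ := by
    rw [mul_add, add_mul, nonsing_inv_mul A hA, one_mul, mul_assoc, mul_nonsing_inv B hB, mul_one,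
      add_comm]
  have hBS : B * (A + B)⁻¹ * (A + B) = B := nonsing_inv_mul_cancel_right _ _ hS
  rw [hfac, Matrix.mul_inv_rev, Matrix.mul_inv_rev, nonsing_inv_nonsing_inv A hA,
    nonsing_inv_nonsing_inv B hB, ← mul_assoc, eq_sub_iff_add_eq, ← mul_add, hBS]

lemma combined_sub_eq_square {n : ℕ} {A B : Matrix (Fin n) (Fin n) ℝ}
    (W : Matrix (Fin n) (Fin n) ℝ)
    (hA : A.PosDef) (hB : B.PosDef) :
    W * A * Wᵀ + (1 - W) * B * (1 - W)ᵀ - (A⁻¹ + B⁻¹)⁻¹ =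
      (W - B * (A + B)⁻¹) * (A + B) * (W - B * (A + B)⁻¹)ᵀ := by
  have hS : IsUnit (A + B).det := (isUnit_iff_isUnit_det _).mp (hA.add hB).isUnit
  have hBt : Bᵀ = B := by simpa using hB.isHermitian.eq
  have hSt : (A + B)ᵀ = A + B := by simpa using (hA.add hB).isHermitian.eq
  rw [inv_add_inv_inv_eq ((isUnit_iff_isUnit_det _).mp hA.isUnit)
    ((isUnit_iff_isUnit_det _).mp hB.isUnit) hS]
  have hBS : B * (A + B)⁻¹ * (A + B) = B := nonsing_inv_mul_cancel_right _ _ hS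
  have hSB : W * (A + B) * ((A + B)⁻¹ * B) = W * B := by
    rw [mul_assoc, mul_nonsing_inv_cancel_left _ _ hS]
  have hWS : W * (A + B) * Wᵀ = W * A * Wᵀ + W * B * Wᵀ := by rw [mul_add, add_mul]
  rw [transpose_sub, transpose_sub, transpose_mul, transpose_nonsing_inv, hSt, hBt, transpose_one,
    sub_mul W, hBS, mul_sub (W * (A + B) - B), sub_mul _ _ Wᵀ,
    sub_mul _ _ ((A + B)⁻¹ * B), hSB, hWS]
  noncomm_ring

theorem stmt_6 (n : ℕ) (Pf Pb W : Matrix (Fin n) (Fin n) ℝ)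
    (hPf : Pf.PosDef) (hPb : Pb.PosDef) :
    (W * Pf * Wᵀ + (1 - W) * Pb * (1 - W)ᵀ - (Pf⁻¹ + Pb⁻¹)⁻¹).PosSemidef ∧
    (W = Pb * (Pf + Pb)⁻¹ →
      W * Pf * Wᵀ + (1 - W) * Pb * (1 - W)ᵀ - (Pf⁻¹ + Pb⁻¹)⁻¹ = 0) := by
  rw [combined_sub_eq_square W hPf hPb]
  refine ⟨?_, fun h => ?_⟩
  · simpa only [conjTranspose_eq_transpose_of_trivial] using
      (hPf.add hPb).posSemidef.mul_mul_conjTranspose_same (W - Pb * (Pf + Pb)⁻¹)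
  · rw [sub_eq_zero.mpr h, zero_mul, zero_mul]
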